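/- Let φ be a satisfiable set of assignments over a finite type V of propositional variables, and suppose every variable v ∈ V is settled, i.e., for each v either v is assigned false in every minimal model of φ or v is assigned true in every minimal model of φ. Then the strengthened formula obtained by additionally requiring every dispensable variable to be false, i.e., the set {α ∈ φ : α v = false for every variable v dispensable w.r.t. φ}, has exactly one element; in other words, invoking the shopping principle function completes the configuration process. -/

import Mathlib

/-- A set of variables `X` is deselectable w.r.t. `φ` if some model of `φ`
assigns `false` to every variable in `X`. -/
def Deselectable {V : Type*} (φ : Set (V → Bool)) (X : Set V) : Prop :=
  ∃ α ∈ φ, ∀ v ∈ X, α v = false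

/-- A variable `v` is dispensable w.r.t. `φ` if every deselectable set stays
deselectable after adding `v`. -/
def Dispensable {V : Type*} (φ : Set (V → Bool)) (v : V) : Prop :=
  ∀ X : Set V, Deselectable φ X → Deselectable φ (X ∪ {v})

/-- A model `α` of `φ` is minimal if no model of `φ` has a strictly smaller
true-set. -/
def MinimalModel {V : Type*} (φ : Set (V → Bool)) (α : V → Bool) : Prop :=
  α ∈ φ ∧ ¬ ∃ α' ∈ φ, {w | α' w = true} ⊂ {w | α w = true}

/-!
A formula with finitely many models has a minimal model below each of its models. If every variable
is settled, the minimal models all agree, so `φ` has a least model `μ`. A set of variables is then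
deselectable exactly when `μ` is false on it, hence the dispensable variables are exactly those that
`μ` makes false. A model that is false on all of these lies below `μ`, and is therefore `μ` itself.
-/

section Order

variable {V : Type*} {φ : Set (V → Bool)} {α β : V → Bool}

theorem setOf_eq_true_subset_iff_le : {w | α w = true} ⊆ {w | β w = true} ↔ α ≤ β :=
  forall_congr' fun _ => Bool.le_iff_imp.symm

theorem setOf_eq_true_ssubset_iff_lt : {w | α w = true} ⊂ {w | β w = true} ↔ α < β := by
  rw [ssubset_iff_subset_not_subset, lt_iff_le_not_ge, setOf_eq_true_subset_iff_le,
    setOf_eq_true_subset_iff_le]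

theorem minimalModel_iff_minimal : MinimalModel φ α ↔ Minimal (· ∈ φ) α := by
  simp only [MinimalModel, minimal_iff_forall_lt, setOf_eq_true_ssubset_iff_lt, not_exists, not_and,
    imp_not_comm]

theorem exists_minimalModel_le_of_finite (hφ : φ.Finite) (hα : α ∈ φ) :
    ∃ μ ≤ α, MinimalModel φ μ := by
  simpa only [minimalModel_iff_minimal] using hφ.exists_le_minimal hα

end Order

section LeastModel

variable {V : Type*} {φ : Set (V → Bool)} {μ : V → Bool}

theorem deselectable_iff_of_isLeast (hμ : IsLeast φ μ) {X : Set V} :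
    Deselectable φ X ↔ ∀ v ∈ X, μ v = false := by
  refine ⟨?_, fun hX => ⟨μ, hμ.1, hX⟩⟩
  rintro ⟨α, hα, hX⟩ v hv
  exact Bool.eq_false_of_le_false ((hμ.2 hα v).trans_eq (hX v hv))

theorem dispensable_iff_of_isLeast (hμ : IsLeast φ μ) {v : V} :
    Dispensable φ v ↔ μ v = false := by
  simp only [Dispensable, deselectable_iff_of_isLeast hμ]
  constructor
  · intro hv
    exact hv ∅ (by simp) v (by simp)
  · rintro hv X hX w (hw | rfl)
    exacts [hX w hw, hv]

theorem mem_and_forall_dispensable_iff_of_isLeast (hμ : IsLeast φ μ) {α : V → Bool} :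
    (α ∈ φ ∧ ∀ v, Dispensable φ v → α v = false) ↔ α = μ := by
  simp only [dispensable_iff_of_isLeast hμ]
  constructor
  · rintro ⟨hα, hfalse⟩
    have hle : α ≤ μ := fun v => by
      rcases Bool.eq_false_or_eq_true (μ v) with htrue | hv
      · exact htrue ▸ Bool.le_true _
      · exact (hfalse v hv).trans_le (Bool.false_le _)
    exact hle.antisymm (hμ.2 hα)
  · rintro rfl
    exact ⟨hμ.1, fun _ => id⟩

end LeastModel

section Settled

variable {V : Type*} {φ : Set (V → Bool)}

/-- A variable `v` is settled w.r.t. `φ` if all minimal models of `φ` give it a common value, so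
that nothing is left to decide about `v`. It holds for every `v` when `φ` has no
minimal model. -/
def Settled (φ : Set (V → Bool)) (v : V) : Prop :=
  ∃ b, ∀ α, MinimalModel φ α → α v = b

theorem MinimalModel.eq_of_settled {μ ν : V → Bool} (hμ : MinimalModel φ μ)
    (hν : MinimalModel φ ν) (hsettled : ∀ v, Settled φ v) : μ = ν := by
  funext v
  obtain ⟨b, hb⟩ := hsettled v
  rw [hb μ hμ, hb ν hν]

theorem exists_isLeast_of_settled (hsat : φ.Nonempty)
    (hminimal : ∀ α ∈ φ, ∃ μ ≤ α, MinimalModel φ μ) (hsettled : ∀ v, Settled φ v) :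
    ∃ μ, IsLeast φ μ := by
  obtain ⟨α₀, hα₀⟩ := hsat
  obtain ⟨μ, -, hμ⟩ := hminimal α₀ hα₀
  refine ⟨μ, hμ.1, fun α hα => ?_⟩
  obtain ⟨ν, hνα, hν⟩ := hminimal α hα
  exact (hμ.eq_of_settled hν hsettled).trans_le hνα

theorem shopping_principle_completes_configuration_general (hsat : φ.Nonempty)
    (hminimal : ∀ α ∈ φ, ∃ μ ≤ α, MinimalModel φ μ) (hsettled : ∀ v, Settled φ v) :
    ∃! α : V → Bool, α ∈ φ ∧ ∀ v : V, Dispensable φ v → α v = false := by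
  obtain ⟨μ, hμ⟩ := exists_isLeast_of_settled hsat hminimal hsettled
  simp only [mem_and_forall_dispensable_iff_of_isLeast hμ, existsUnique_eq]

end Settled

theorem shopping_principle_completes_configuration
    {V : Type*} [Finite V] (φ : Set (V → Bool)) (hsat : φ.Nonempty)
    (hsettled : ∀ v : V,
      (∀ α : V → Bool, MinimalModel φ α → α v = false) ∨
      (∀ α : V → Bool, MinimalModel φ α → α v = true)) :
    ∃! α : V → Bool, α ∈ φ ∧ ∀ v : V, Dispensable φ v → α v = false :=
  shopping_principle_completes_configuration_general hsat
    (fun _ => exists_minimalModel_le_of_finite φ.toFinite) fun v => Bool.exists_bool.2 (hsettled v)
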